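/- (Closed form for bumpered billiard tables B2(5,n), even case.) For every even n ≥ 4 and all signs e ∈ {1,-1}^(2n-3): B_n(e₁,…,e_{2n-3}) = H_{n-1}(e₁,…,e_{2n-4})·a(e_{2n-3}) + M(e₁,e₂,e₃)·∏_{m=1}^{(n-4)/2} K(e_{4m},e_{4m+1},e_{4m+2},e_{4m+3})·f₂(-e_{2n-4})·a(-e_{2n-3}) + Σ_{i=0}^{(n-4)/2} H_{n-2-2i}(e₁,…,e_{2n-6-4i})·a(e_{2n-5-4i})·∏_{m=1}^{i} K(e_{2n-4-4i+4(m-1)},e_{2n-3-4i+4(m-1)},e_{2n-2-4i+4(m-1)},e_{2n-1-4i+4(m-1)})·f₂(-e_{2n-4})·a(-e_{2n-3}) + Σ_{i=0}^{(n-6)/2} H_{n-3-2i}(e₁,…,e_{2n-8-4i})·L(e_{2n-7-4i},e_{2n-6-4i},e_{2n-5-4i})·∏_{m=1}^{i} K(e_{2n-4-4i+4(m-1)},e_{2n-3-4i+4(m-1)},e_{2n-2-4i+4(m-1)},e_{2n-1-4i+4(m-1)})·f₂(-e_{2n-4})·a(-e_{2n-3}). -/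

import Mathlib

/-!
Two steps of the recursion for `B` give `B_{2k+5} = H_{2k+4}·a + H_{2k+3}·L + B_{2k+3}·K`. The
middle step evaluates `B_{2k+4}` at a sign sequence with one entry overwritten, but that entry is
invisible to the brackets `H_{2k+3}` and `B_{2k+3}` into which it unfolds. Thus the odd brackets
satisfy a first-order linear recurrence starting at `B_3 = H_2·a + M`. One further step of the
recursion reaches the even brackets.
-/

open LaurentPolynomial Finset

noncomputable section

/-- The ring `ℤ[A, A⁻¹]` of Laurent polynomials over `ℤ`; the variable `A` is
`LaurentPolynomial.T 1`, and `A^n = T n` for `n : ℤ`. -/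
abbrev KR : Type := LaurentPolynomial ℤ

/-- `a ε = A^ε`. -/
def Ca (ε : ℤ) : KR := T ε

/-- `f₂ ε = -A^(-3ε)`. -/
def Cf₂ (ε : ℤ) : KR := -T (-3 * ε)

/-- `δ = -A² - A⁻²`. -/
def Cδ : KR := -T 2 - T (-2)

/-- `X(α,β) = δ·a(α)a(β) + a(α)a(-β) + a(-α)a(β)`. -/
def CX (α β : ℤ) : KR := Cδ * Ca α * Ca β + Ca α * Ca (-β) + Ca (-α) * Ca β

/-- `g₂(α,β) = X(α,β) + δ·a(-α)a(-β)`, the Kauffman bracket of `T(4,2)`. -/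
def Cg₂ (α β : ℤ) : KR := CX α β + Cδ * Ca (-α) * Ca (-β)

/-- `K(α,β,γ,η) = f₂(-α)f₂(-β)a(-γ)a(-η)`. -/
def CK (α β γ η : ℤ) : KR := Cf₂ (-α) * Cf₂ (-β) * Ca (-γ) * Ca (-η)

/-- `N(α,β,γ,η) = f₂(-α)a(-β)a(-γ)a(-η)`. -/
def CN (α β γ η : ℤ) : KR := Cf₂ (-α) * Ca (-β) * Ca (-γ) * Ca (-η)

/-- `Ñ(α,β,γ,η) = a(-α)f₂(-β)a(-γ)a(-η)`. -/
def CNt (α β γ η : ℤ) : KR := Ca (-α) * Cf₂ (-β) * Ca (-γ) * Ca (-η)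

/-- `R(α,β,γ,η) = f₂(-α)a(β)a(-γ)a(-η)`. -/
def CR (α β γ η : ℤ) : KR := Cf₂ (-α) * Ca β * Ca (-γ) * Ca (-η)

/-- `R̃(α,β,γ,η) = a(α)f₂(-β)a(-γ)a(-η)`. -/
def CRt (α β γ η : ℤ) : KR := Ca α * Cf₂ (-β) * Ca (-γ) * Ca (-η)

/-- `S(α,β,γ,η) = f₂(α)f₂(-β)a(-γ)a(-η)`. -/
def CS (α β γ η : ℤ) : KR := Cf₂ α * Cf₂ (-β) * Ca (-γ) * Ca (-η)

/-- `L(α,β,γ) = f₂(-α)a(β)a(-γ)`. -/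
def CL (α β γ : ℤ) : KR := Cf₂ (-α) * Ca β * Ca (-γ)

/-- `M(α,β,γ) = f₂(-α)f₂(β)a(-γ)`. -/
def CM (α β γ : ℤ) : KR := Cf₂ (-α) * Cf₂ β * Ca (-γ)

mutual
  /-- `H n e` is the Kauffman bracket of the Chebyshev billiard table diagram `T(5,n)`
  with crossing signs `e 1, …, e (2n-2)`. -/
  def Hb : ℕ → (ℕ → ℤ) → KR
    | 0, _ => 1
    | 1, _ => 1
    | 2, e =>
        Ca (e 1) * Ca (e 2) + Cδ * Ca (e 1) * Ca (-e 2) + Cδ * Ca (-e 1) * Ca (e 2)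
          + Cδ ^ 2 * Ca (-e 1) * Ca (-e 2)
    | m + 3, e =>
        Hb (m + 2) e * Ca (e (2 * m + 3)) * Ca (e (2 * m + 4))
          + Hb (m + 1) e * CK (e (2 * m + 1)) (e (2 * m + 2)) (e (2 * m + 3)) (e (2 * m + 4))
          + if (m + 3) % 2 = 1 then
              BTb (m + 2) e * Ca (e (2 * m + 3)) * Ca (-e (2 * m + 4))
                + Bb (m + 2) (Function.update e (2 * m + 1) (e (2 * m + 2)))
                    * Cf₂ (-e (2 * m + 1)) * Ca (-e (2 * m + 3)) * Ca (e (2 * m + 4))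
            else
              BTb (m + 2) e * Ca (-e (2 * m + 3)) * Ca (e (2 * m + 4))
                + Bb (m + 2) e * Cf₂ (-e (2 * m + 2)) * Ca (e (2 * m + 3)) * Ca (-e (2 * m + 4))
  termination_by n _ => n

  /-- `B n e` is the Kauffman bracket of the bumpered billiard table `B2(5,n)` with
  crossing signs `e 1, …, e (2n-3)`. -/
  def Bb : ℕ → (ℕ → ℤ) → KR
    | 0, _ => 1
    | 1, _ => 1
    | 2, e => Cf₂ (e 1)
    | m + 3, e =>
        Hb (m + 2) e * Ca (e (2 * m + 3))
          + if (m + 3) % 2 = 1 then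
              Bb (m + 2) (Function.update e (2 * m + 1) (e (2 * m + 2)))
                * Cf₂ (-e (2 * m + 1)) * Ca (-e (2 * m + 3))
            else
              Bb (m + 2) e * Cf₂ (-e (2 * m + 2)) * Ca (-e (2 * m + 3))
  termination_by n _ => n

  /-- `BT n e` is the Kauffman bracket of the bumpered billiard table `B1(5,n)` with its
  crossingless tangle closure, with crossing signs `e 1, …, e (2n-2)`. -/
  def BTb : ℕ → (ℕ → ℤ) → KR
    | 0, _ => 1
    | 1, _ => 1
    | 2, e => Cg₂ (e 1) (e 2)
    | 3, e => Hb 2 e * CX (e 3) (e 4) + CS (e 1) (e 2) (e 3) (e 4)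
    | 4, e =>
        Hb 3 e * CX (e 5) (e 6) + Hb 2 e * CR (e 3) (e 4) (e 5) (e 6)
          + Cg₂ (e 1) (e 2) * CN (e 3) (e 4) (e 5) (e 6)
    | m + 5, e =>
        Hb (m + 4) e * CX (e (2 * m + 7)) (e (2 * m + 8))
          + if (m + 5) % 2 = 1 then
              Hb (m + 3) e * CRt (e (2 * m + 5)) (e (2 * m + 6)) (e (2 * m + 7)) (e (2 * m + 8))
                + BTb (m + 3) e * CNt (e (2 * m + 5)) (e (2 * m + 6)) (e (2 * m + 7)) (e (2 * m + 8))
            else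
              Hb (m + 3) e * CR (e (2 * m + 5)) (e (2 * m + 6)) (e (2 * m + 7)) (e (2 * m + 8))
                + BTb (m + 3) e * CN (e (2 * m + 5)) (e (2 * m + 6)) (e (2 * m + 7)) (e (2 * m + 8))
  termination_by n _ => n
end

theorem eq_mul_prod_add_sum_of_succ_eq {R : Type*} [CommSemiring R] {b c q : ℕ → R}
    (hb : ∀ k, b (k + 1) = c k + b k * q k) (k : ℕ) :
    b k = b 0 * ∏ j ∈ range k, q j + ∑ i ∈ range k, c i * ∏ j ∈ Ico (i + 1) k, q j := by
  induction k with
  | zero => simp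
  | succ k ih =>
    have hsum : ∑ i ∈ range k, c i * ∏ j ∈ Ico (i + 1) (k + 1), q j
        = (∑ i ∈ range k, c i * ∏ j ∈ Ico (i + 1) k, q j) * q k := by
      rw [sum_mul]
      refine sum_congr rfl fun i hi => ?_
      rw [prod_Ico_succ_top (mem_range.1 hi), mul_assoc]
    rw [hb, ih, prod_range_succ, sum_range_succ, hsum, Ico_self, prod_empty]
    ring

theorem eqOn_update_update {α β : Type*} [DecidableEq α] {f g : α → β} {s : Set α}
    (h : Set.EqOn f g s) (a : α) (b : β) :
    Set.EqOn (Function.update f a b) (Function.update g a b) s := by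
  intro i hi
  simp only [Function.update_apply, h hi]

mutual
  theorem Hb_congr : ∀ {n : ℕ} {e e' : ℕ → ℤ},
      Set.EqOn e e' (Set.Icc 1 (2 * n - 2)) → Hb n e = Hb n e'
    | 0, _, _, _ => by simp only [Hb]
    | 1, _, _, _ => by simp only [Hb]
    | 2, _, _, h => by simp only [Hb, h ⟨le_refl 1, by omega⟩, h ⟨one_le_two, le_refl 2⟩]
    | m + 3, e, e', h => by
      have hsign : ∀ i, 1 ≤ i → i ≤ 2 * m + 4 → e i = e' i := fun i h₁ h₂ => h ⟨h₁, by omega⟩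
      have heqOn : ∀ l ≤ 2 * m + 4, Set.EqOn e e' (Set.Icc 1 l) :=
        fun l hl i hi => hsign i hi.1 (hi.2.trans hl)
      simp only [Hb, Hb_congr (n := m + 2) (heqOn _ (by omega)),
        Hb_congr (n := m + 1) (heqOn _ (by omega)), BTb_congr (n := m + 2) (heqOn _ (by omega)),
        Bb_congr (n := m + 2) (heqOn _ (by omega)),
        Bb_congr (n := m + 2) (eqOn_update_update (heqOn _ (by omega)) _ _),
        hsign (2 * m + 1) (by omega) (by omega), hsign (2 * m + 2) (by omega) (by omega),
        hsign (2 * m + 3) (by omega) (by omega), hsign (2 * m + 4) (by omega) (by omega)]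
  termination_by n => n

  theorem Bb_congr : ∀ {n : ℕ} {e e' : ℕ → ℤ},
      Set.EqOn e e' (Set.Icc 1 (2 * n - 3)) → Bb n e = Bb n e'
    | 0, _, _, _ => by simp only [Bb]
    | 1, _, _, _ => by simp only [Bb]
    | 2, _, _, h => by simp only [Bb, h ⟨le_refl 1, le_refl 1⟩]
    | m + 3, e, e', h => by
      have hsign : ∀ i, 1 ≤ i → i ≤ 2 * m + 3 → e i = e' i := fun i h₁ h₂ => h ⟨h₁, by omega⟩
      have heqOn : ∀ l ≤ 2 * m + 3, Set.EqOn e e' (Set.Icc 1 l) :=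
        fun l hl i hi => hsign i hi.1 (hi.2.trans hl)
      simp only [Bb, Hb_congr (n := m + 2) (heqOn _ (by omega)),
        Bb_congr (n := m + 2) (heqOn _ (by omega)),
        Bb_congr (n := m + 2) (eqOn_update_update (heqOn _ (by omega)) _ _),
        hsign (2 * m + 1) (by omega) (by omega), hsign (2 * m + 2) (by omega) (by omega),
        hsign (2 * m + 3) (by omega) (by omega)]
  termination_by n => n

  theorem BTb_congr : ∀ {n : ℕ} {e e' : ℕ → ℤ},
      Set.EqOn e e' (Set.Icc 1 (2 * n - 2)) → BTb n e = BTb n e'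
    | 0, _, _, _ => by simp only [BTb]
    | 1, _, _, _ => by simp only [BTb]
    | 2, _, _, h => by simp only [BTb, h ⟨le_refl 1, by omega⟩, h ⟨one_le_two, le_refl 2⟩]
    | 3, e, e', h => by
      have hsign : ∀ i, 1 ≤ i → i ≤ 4 → e i = e' i := fun i h₁ h₂ => h ⟨h₁, h₂⟩
      simp only [BTb, Hb_congr (n := 2) fun i hi => hsign i hi.1 (hi.2.trans (by omega)),
        hsign 1, hsign 2, hsign 3, hsign 4, Nat.one_le_ofNat, Nat.reduceLeDiff, le_refl]
    | 4, e, e', h => by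
      have hsign : ∀ i, 1 ≤ i → i ≤ 6 → e i = e' i := fun i h₁ h₂ => h ⟨h₁, h₂⟩
      simp only [BTb, Hb_congr (n := 2) fun i hi => hsign i hi.1 (hi.2.trans (by omega)),
        Hb_congr (n := 3) fun i hi => hsign i hi.1 (hi.2.trans (by omega)),
        hsign 1, hsign 2, hsign 3, hsign 4, hsign 5, hsign 6,
        Nat.one_le_ofNat, Nat.reduceLeDiff, le_refl]
    | m + 5, e, e', h => by
      have hsign : ∀ i, 1 ≤ i → i ≤ 2 * m + 8 → e i = e' i := fun i h₁ h₂ => h ⟨h₁, by omega⟩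
      have heqOn : ∀ l ≤ 2 * m + 8, Set.EqOn e e' (Set.Icc 1 l) :=
        fun l hl i hi => hsign i hi.1 (hi.2.trans hl)
      simp only [BTb, Hb_congr (n := m + 4) (heqOn _ (by omega)),
        Hb_congr (n := m + 3) (heqOn _ (by omega)), BTb_congr (n := m + 3) (heqOn _ (by omega)),
        hsign (2 * m + 5) (by omega) (by omega), hsign (2 * m + 6) (by omega) (by omega),
        hsign (2 * m + 7) (by omega) (by omega), hsign (2 * m + 8) (by omega) (by omega)]
  termination_by n => n
end

section ClosedForm

variable (e : ℕ → ℤ) (k : ℕ)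

theorem Bb_two_mul_add_three :
    Bb (2 * k + 3) e = Hb (2 * k + 2) e * Ca (e (4 * k + 3))
      + Bb (2 * k + 2) (Function.update e (4 * k + 1) (e (4 * k + 2)))
        * Cf₂ (-e (4 * k + 1)) * Ca (-e (4 * k + 3)) := by
  have hindex : 2 * (2 * k) = 4 * k := by ring
  rw [Bb, if_pos (by omega), hindex]

theorem Bb_two_mul_add_four :
    Bb (2 * k + 4) e = Hb (2 * k + 3) e * Ca (e (4 * k + 5))
      + Bb (2 * k + 3) e * Cf₂ (-e (4 * k + 4)) * Ca (-e (4 * k + 5)) := by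
  have hindex : 2 * (2 * k + 1) = 4 * k + 2 := by ring
  rw [Bb, if_neg (by omega), hindex]

theorem Bb_three : Bb 3 e = Hb 2 e * Ca (e 3) + CM (e 1) (e 2) (e 3) := by
  rw [Bb_two_mul_add_three e 0, Bb, Function.update_self, CM]
  ring

/-- The factor `K(e_{4j+4}, e_{4j+5}, e_{4j+6}, e_{4j+7})` by which `B_{2j+3}` is multiplied when
`B_{2j+5}` is expanded. -/
def kFactor (j : ℕ) : KR :=
  CK (e (4 * j + 4)) (e (4 * j + 5)) (e (4 * j + 6)) (e (4 * j + 7))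

theorem Bb_two_mul_add_five :
    Bb (2 * k + 5) e = Hb (2 * k + 4) e * Ca (e (4 * k + 7))
      + Hb (2 * k + 3) e * CL (e (4 * k + 5)) (e (4 * k + 6)) (e (4 * k + 7))
      + Bb (2 * k + 3) e * kFactor e k := by
  set e' := Function.update e (4 * k + 5) (e (4 * k + 6)) with he'
  have hagree : ∀ l < 4 * k + 5, Set.EqOn e' e (Set.Icc 1 l) := fun l hl i hi =>
    Function.update_of_ne (by have := hi.2; omega) _ _
  have hmiddle : Bb (2 * k + 4) e' = Hb (2 * k + 3) e * Ca (e (4 * k + 6))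
      + Bb (2 * k + 3) e * Cf₂ (-e (4 * k + 4)) * Ca (-e (4 * k + 6)) := by
    rw [Bb_two_mul_add_four, Hb_congr (hagree _ (by omega)), Bb_congr (hagree _ (by omega)), he',
      Function.update_self, Function.update_of_ne (by omega)]
  calc Bb (2 * k + 5) e = Hb (2 * k + 4) e * Ca (e (4 * k + 7))
        + Bb (2 * k + 4) e' * Cf₂ (-e (4 * k + 5)) * Ca (-e (4 * k + 7)) :=
      Bb_two_mul_add_three e (k + 1)
    _ = _ := by
      rw [hmiddle, CL, kFactor, CK]
      ring

theorem Bb_odd_closed_form :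
    Bb (2 * k + 3) e = CM (e 1) (e 2) (e 3) * ∏ j ∈ range k, kFactor e j
      + ∑ i ∈ range (k + 1),
          Hb (2 * i + 2) e * Ca (e (4 * i + 3)) * ∏ j ∈ Ico i k, kFactor e j
      + ∑ i ∈ range k,
          Hb (2 * i + 3) e * CL (e (4 * i + 5)) (e (4 * i + 6)) (e (4 * i + 7)) *
            ∏ j ∈ Ico (i + 1) k, kFactor e j := by
  have hsolve := eq_mul_prod_add_sum_of_succ_eq (b := fun k => Bb (2 * k + 3) e)
    (Bb_two_mul_add_five e) k
  simp only [mul_zero, zero_add, Bb_three, add_mul, sum_add_distrib] at hsolve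
  rw [hsolve, sum_range_succ', range_eq_Ico]
  simp only [mul_add, mul_zero, zero_add, mul_one, add_assoc, Nat.reduceAdd]
  ring

theorem prod_Ico_kFactor {i : ℕ} (hi : i ≤ k) :
    ∏ j ∈ Ico (k - i) k, kFactor e j = ∏ m ∈ range i,
      CK (e (4 * k + 4 - 4 * i + 4 * m)) (e (4 * k + 5 - 4 * i + 4 * m))
        (e (4 * k + 6 - 4 * i + 4 * m)) (e (4 * k + 7 - 4 * i + 4 * m)) := by
  rw [prod_Ico_eq_prod_range, Nat.sub_sub_self hi]
  refine prod_congr rfl fun m _ => ?_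
  rw [kFactor]
  congr 2 <;> omega

theorem Bb_odd_closed_form_reflect :
    Bb (2 * k + 3) e =
      CM (e 1) (e 2) (e 3) *
          (∏ m ∈ range k, CK (e (4 * m + 4)) (e (4 * m + 5)) (e (4 * m + 6)) (e (4 * m + 7)))
        + (∑ i ∈ range (k + 1),
            Hb (2 * k + 2 - 2 * i) e * Ca (e (4 * k + 3 - 4 * i)) *
              ∏ m ∈ range i,
                CK (e (4 * k + 4 - 4 * i + 4 * m)) (e (4 * k + 5 - 4 * i + 4 * m))
                  (e (4 * k + 6 - 4 * i + 4 * m)) (e (4 * k + 7 - 4 * i + 4 * m)))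
        + ∑ i ∈ range k,
            Hb (2 * k + 1 - 2 * i) e *
                CL (e (4 * k + 1 - 4 * i)) (e (4 * k + 2 - 4 * i)) (e (4 * k + 3 - 4 * i)) *
              ∏ m ∈ range i,
                CK (e (4 * k + 4 - 4 * i + 4 * m)) (e (4 * k + 5 - 4 * i + 4 * m))
                  (e (4 * k + 6 - 4 * i + 4 * m)) (e (4 * k + 7 - 4 * i + 4 * m)) := by
  rw [Bb_odd_closed_form, ← sum_range_reflect _ (k + 1), ← sum_range_reflect _ k]
  refine congrArg₂ (· + ·) (congrArg (_ + ·) (sum_congr rfl fun i hi => ?_))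
    (sum_congr rfl fun i hi => ?_)
  · have hik : i ≤ k := Nat.lt_succ_iff.1 (mem_range.1 hi)
    rw [← prod_Ico_kFactor e k hik, Nat.add_sub_cancel,
      show 2 * (k - i) + 2 = 2 * k + 2 - 2 * i by omega,
      show 4 * (k - i) + 3 = 4 * k + 3 - 4 * i by omega]
  · have hik : i < k := mem_range.1 hi
    rw [← prod_Ico_kFactor e k hik.le,
      show k - 1 - i + 1 = k - i by omega,
      show 2 * (k - 1 - i) + 3 = 2 * k + 1 - 2 * i by omega,
      show 4 * (k - 1 - i) + 5 = 4 * k + 1 - 4 * i by omega,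
      show 4 * (k - 1 - i) + 6 = 4 * k + 2 - 4 * i by omega,
      show 4 * (k - 1 - i) + 7 = 4 * k + 3 - 4 * i by omega]

end ClosedForm

theorem bumpered_B2_closed_form_even_general (n : ℕ) (hn : 4 ≤ n) (heven : n % 2 = 0)
    (e : ℕ → ℤ) :
    Bb n e =
      Hb (n - 1) e * Ca (e (2 * n - 3))
        + CM (e 1) (e 2) (e 3) *
            (∏ m ∈ Finset.range ((n - 4) / 2),
              CK (e (4 * m + 4)) (e (4 * m + 5)) (e (4 * m + 6)) (e (4 * m + 7))) *
            Cf₂ (-e (2 * n - 4)) * Ca (-e (2 * n - 3))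
        + (∑ i ∈ Finset.range ((n - 4) / 2 + 1),
            Hb (n - 2 - 2 * i) e * Ca (e (2 * n - 5 - 4 * i)) *
              (∏ m ∈ Finset.range i,
                CK (e (2 * n - 4 - 4 * i + 4 * m)) (e (2 * n - 3 - 4 * i + 4 * m))
                  (e (2 * n - 2 - 4 * i + 4 * m)) (e (2 * n - 1 - 4 * i + 4 * m))) *
              Cf₂ (-e (2 * n - 4)) * Ca (-e (2 * n - 3)))
        + ∑ i ∈ Finset.range ((n - 4) / 2),
            Hb (n - 3 - 2 * i) e *
                CL (e (2 * n - 7 - 4 * i)) (e (2 * n - 6 - 4 * i)) (e (2 * n - 5 - 4 * i)) *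
              (∏ m ∈ Finset.range i,
                CK (e (2 * n - 4 - 4 * i + 4 * m)) (e (2 * n - 3 - 4 * i + 4 * m))
                  (e (2 * n - 2 - 4 * i + 4 * m)) (e (2 * n - 1 - 4 * i + 4 * m))) *
              Cf₂ (-e (2 * n - 4)) * Ca (-e (2 * n - 3)) := by
  obtain ⟨k, rfl⟩ : ∃ k, n = 2 * k + 4 := ⟨(n - 4) / 2, by omega⟩
  have hhalf : 2 * k / 2 = k := by omega
  have hdouble : 2 * (2 * k + 4) = 4 * k + 8 := by ring
  simp only [hdouble, Nat.reduceSubDiff, Nat.add_succ_sub_one, hhalf, ← sum_mul]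
  rw [Bb_two_mul_add_four, Bb_odd_closed_form_reflect]
  ring

/-- Closed form for the Kauffman bracket of the bumpered billiard tables `B2(5,n)`,
even case. -/
theorem bumpered_B2_closed_form_even (n : ℕ) (hn : 4 ≤ n) (heven : n % 2 = 0)
    (e : ℕ → ℤ) (he : ∀ i, e i = 1 ∨ e i = -1) :
    Bb n e =
      Hb (n - 1) e * Ca (e (2 * n - 3))
        + CM (e 1) (e 2) (e 3) *
            (∏ m ∈ Finset.range ((n - 4) / 2),
              CK (e (4 * m + 4)) (e (4 * m + 5)) (e (4 * m + 6)) (e (4 * m + 7))) *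
            Cf₂ (-e (2 * n - 4)) * Ca (-e (2 * n - 3))
        + (∑ i ∈ Finset.range ((n - 4) / 2 + 1),
            Hb (n - 2 - 2 * i) e * Ca (e (2 * n - 5 - 4 * i)) *
              (∏ m ∈ Finset.range i,
                CK (e (2 * n - 4 - 4 * i + 4 * m)) (e (2 * n - 3 - 4 * i + 4 * m))
                  (e (2 * n - 2 - 4 * i + 4 * m)) (e (2 * n - 1 - 4 * i + 4 * m))) *
              Cf₂ (-e (2 * n - 4)) * Ca (-e (2 * n - 3)))
        + ∑ i ∈ Finset.range ((n - 4) / 2),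
            Hb (n - 3 - 2 * i) e *
                CL (e (2 * n - 7 - 4 * i)) (e (2 * n - 6 - 4 * i)) (e (2 * n - 5 - 4 * i)) *
              (∏ m ∈ Finset.range i,
                CK (e (2 * n - 4 - 4 * i + 4 * m)) (e (2 * n - 3 - 4 * i + 4 * m))
                  (e (2 * n - 2 - 4 * i + 4 * m)) (e (2 * n - 1 - 4 * i + 4 * m))) *
              Cf₂ (-e (2 * n - 4)) * Ca (-e (2 * n - 3)) := by
  exact bumpered_B2_closed_form_even_general n hn heven e

end
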